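/- arXiv:1908.09660 — 2 statements merged into one kernel-verified Lean document; each statement's English description precedes it below -/
import Mathlib

section
/- Let ω be a measurement function, V a finite-step control Lyapunov function for time step M with decay function α (α ∈ K∞, α(s) < s for s > 0) and associated afcl q. Let q̂ : X → U^M be a map such that for every ξ ∈ X: all components of q̂(ξ) lie in U; g^j(ξ, q̂(ξ)) ∈ X for j = 1,…,M; V(g^M(ξ, q̂(ξ))) ≤ α(V(ξ)); and Σ_{i=0}^{M−1} V(x(i,ξ,q̂(ξ))) ≤ Σ_{i=0}^{M−1} V(x(i,ξ,q(ξ))). Then q̂ is an admissible finite-step feedback control law and q̂ asymptotically ω-stabilizes the set A := ω⁻¹(0): there exists a class-KL function β such that ω(x_{q̂}(t,ξ)) ≤ β(ω(ξ), t) for all ξ ∈ X and t ∈ ℕ. -/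
open Filter Finset NNReal

noncomputable section

/-- A class-K function on `[0,∞)`: continuous, strictly increasing, zero at zero. -/
def ClassK (κ : ℝ≥0 → ℝ≥0) : Prop :=
  Continuous κ ∧ StrictMono κ ∧ κ 0 = 0

/-- A class-K∞ function: class K and unbounded. -/
def ClassKInf (κ : ℝ≥0 → ℝ≥0) : Prop :=
  ClassK κ ∧ Filter.Tendsto κ Filter.atTop Filter.atTop

/-- A class-KL function. -/
def ClassKL (β : ℝ≥0 → ℝ≥0 → ℝ≥0) : Prop :=
  Continuous (fun p : ℝ≥0 × ℝ≥0 => β p.1 p.2) ∧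
  (∀ s : ℝ≥0, ClassK fun r => β r s) ∧
  (∀ r : ℝ≥0, Antitone (fun s => β r s) ∧
    Filter.Tendsto (fun s => β r s) Filter.atTop (nhds 0))

/-- The iterates `g^j(ξ, u)` of the control system `x⁺ = g(x,u)` under the
control sequence `u` starting from `ξ`. -/
def iter {n m : ℕ} (g : (Fin n → ℝ) → (Fin m → ℝ) → (Fin n → ℝ)) (ξ : Fin n → ℝ)
    (u : ℕ → Fin m → ℝ) : ℕ → Fin n → ℝ
  | 0 => ξ
  | j + 1 => g (iter g ξ u j) (u j)

/-- `q : X → U^M` is an admissible finite-step feedback control law (afcl) of length `M`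
for the system `g` with state constraint set `X`, input constraint set `U` and
measurement function `ω`. -/
def IsAfcl {n m : ℕ} (ω : (Fin n → ℝ) → ℝ≥0) (X : Set (Fin n → ℝ)) (U : Set (Fin m → ℝ))
    (g : (Fin n → ℝ) → (Fin m → ℝ) → (Fin n → ℝ)) (M : ℕ)
    (q : (Fin n → ℝ) → ℕ → Fin m → ℝ) : Prop :=
  (∀ ξ ∈ X, ∀ j < M, q ξ j ∈ U) ∧
  (∀ ξ ∈ X, ∀ j : ℕ, 1 ≤ j → j ≤ M → iter g ξ (q ξ) j ∈ X) ∧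
  (∀ j : ℕ, 1 ≤ j → j ≤ M → ∃ κ : ℝ≥0 → ℝ≥0, ClassK κ ∧
    ∀ ξ ∈ X, ω (iter g ξ (q ξ) j) ≤ κ (ω ξ))

/-- States of the closed loop under the `M`-step feedback `q` at time instants `kM`. -/
def loopBase {n m : ℕ} (g : (Fin n → ℝ) → (Fin m → ℝ) → (Fin n → ℝ)) (M : ℕ)
    (q : (Fin n → ℝ) → ℕ → Fin m → ℝ) (ξ : Fin n → ℝ) : ℕ → Fin n → ℝ
  | 0 => ξ
  | k + 1 => iter g (loopBase g M q ξ k) (q (loopBase g M q ξ k)) M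

/-- The closed-loop trajectory `x_q(t, ξ)`: for `t = kM + j`, `j ∈ {0,…,M-1}`,
`x_q(kM + j) = g^j(x_q(kM), q(x_q(kM)))`. -/
def closedLoop {n m : ℕ} (g : (Fin n → ℝ) → (Fin m → ℝ) → (Fin n → ℝ)) (M : ℕ)
    (q : (Fin n → ℝ) → ℕ → Fin m → ℝ) (ξ : Fin n → ℝ) (t : ℕ) : Fin n → ℝ :=
  iter g (loopBase g M q ξ (t / M)) (q (loopBase g M q ξ (t / M))) (t % M)

theorem ClassK.comp' {f h : ℝ≥0 → ℝ≥0} (hf : ClassK f) (hh : ClassK h) :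
    ClassK (fun x => f (h x)) :=
  ⟨hf.1.comp hh.1, hf.2.1.comp hh.2.1, by simp [hf.2.2, hh.2.2]⟩

theorem ClassK.iterate' {f : ℝ≥0 → ℝ≥0} (hf : ClassK f) (k : ℕ) : ClassK (f^[k]) :=
  ⟨hf.1.iterate k, hf.2.1.iterate k, Function.iterate_fixed hf.2.2 k⟩

theorem ClassKInf.exists_inv {f : ℝ≥0 → ℝ≥0} (hf : ClassKInf f) :
    ∃ f' : ℝ≥0 → ℝ≥0, ClassK f' ∧ (∀ x, f' (f x) = x) ∧ ∀ x, f (f' x) = x := by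
  have hsurj : Function.Surjective f := by
    refine hf.1.1.surjective hf.2 ?_
    rw [OrderBot.atBot_eq]
    simp only [bot_eq_zero', tendsto_pure_left, hf.1.2.2]
    intro s hs
    simpa using hs
  let e := StrictMono.orderIsoOfSurjective f hf.1.2.1 hsurj
  have h1 : ∀ x, e.symm (f x) = x := fun x => e.symm_apply_apply x
  refine ⟨e.symm, ⟨e.symm.continuous, e.symm.strictMono, ?_⟩, h1, fun x => e.apply_symm_apply x⟩
  have := h1 0
  rwa [hf.1.2.2] at this

theorem classK_sum {M : ℕ} (hM : 1 ≤ M) (f : ℕ → ℝ≥0 → ℝ≥0) (hf : ∀ i < M, ClassK (f i)) :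
    ClassK (fun x => ∑ i ∈ Finset.range M, f i x) := by
  refine ⟨?_, ?_, ?_⟩
  · exact continuous_finsetSum _ fun i hi => (hf i (Finset.mem_range.1 hi)).1
  · intro a b hab
    refine Finset.sum_lt_sum_of_nonempty ⟨0, Finset.mem_range.2 hM⟩ fun i hi => ?_
    exact (hf i (Finset.mem_range.1 hi)).2.1 hab
  · exact Finset.sum_eq_zero fun i hi => (hf i (Finset.mem_range.1 hi)).2.2

/-- Piecewise linear interpolation of the iterates of `α`. -/
def interp (α : ℝ≥0 → ℝ≥0) (v s : ℝ≥0) : ℝ≥0 :=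
  ((⌊s⌋₊ : ℝ≥0) + 1 - s) * α^[⌊s⌋₊] v + (s - (⌊s⌋₊ : ℝ≥0)) * α^[⌊s⌋₊ + 1] v

section interp
variable {α : ℝ≥0 → ℝ≥0}

theorem iterate_succ_le' (hle : ∀ s, α s ≤ s) (v : ℝ≥0) (k : ℕ) :
    α^[k + 1] v ≤ α^[k] v := by
  rw [Function.iterate_succ_apply']; exact hle _

theorem iterate_antitone' (hle : ∀ s, α s ≤ s) (v : ℝ≥0) : Antitone fun k : ℕ => α^[k] v :=
  antitone_nat_of_succ_le (iterate_succ_le' hle v)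

theorem iterate_tendsto' (hc : Continuous α) (hle : ∀ s, α s ≤ s)
    (hlt : ∀ s, 0 < s → α s < s) (v : ℝ≥0) :
    Tendsto (fun k : ℕ => α^[k] v) atTop (nhds 0) := by
  have h := tendsto_atTop_ciInf (iterate_antitone' hle v) (OrderBot.bddBelow _)
  have hfix := isFixedPt_of_tendsto_iterate h hc.continuousAt
  have h0 : (⨅ k : ℕ, α^[k] v) = 0 := by
    by_contra hne
    exact absurd hfix (hlt _ (pos_iff_ne_zero.2 hne)).ne
  rwa [h0] at h

theorem interp_eq (v s : ℝ≥0) (k : ℕ) (h1 : (k : ℝ≥0) ≤ s) (h2 : s ≤ k + 1) :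
    interp α v s = ((k : ℝ≥0) + 1 - s) * α^[k] v + (s - (k : ℝ≥0)) * α^[k + 1] v := by
  rcases h2.lt_or_eq with h | h
  · have : ⌊s⌋₊ = k := (Nat.floor_eq_iff (zero_le)).2 ⟨h1, h⟩
    rw [interp, this]
  · have : ⌊s⌋₊ = k + 1 := by rw [h]; exact_mod_cast Nat.floor_natCast (k + 1)
    rw [interp, this, h]
    simp

theorem interp_real (v s : ℝ≥0) (k : ℕ) (h1 : (k : ℝ≥0) ≤ s) (h2 : s ≤ k + 1) :
    (interp α v s : ℝ) = ((k : ℝ) + 1 - s) * (α^[k] v : ℝ≥0) + (s - (k : ℝ)) * (α^[k + 1] v : ℝ≥0) := by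
  rw [interp_eq v s k h1 h2]
  push_cast [NNReal.coe_sub h1, NNReal.coe_sub h2]
  rfl

theorem interp_le (hle : ∀ s, α s ≤ s) (v s : ℝ≥0) : interp α v s ≤ α^[⌊s⌋₊] v := by
  have h1 : ((⌊s⌋₊ : ℕ) : ℝ≥0) ≤ s := Nat.floor_le (zero_le)
  have h2 : s ≤ (⌊s⌋₊ : ℕ) + 1 := (Nat.lt_floor_add_one s).le
  have h3 := iterate_succ_le' hle v ⌊s⌋₊
  rw [← NNReal.coe_le_coe] at h1 h2 h3 ⊢
  rw [interp_real v s ⌊s⌋₊ (by exact_mod_cast h1) (by exact_mod_cast h2)]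
  push_cast at h1 h2
  nlinarith

theorem le_interp (hle : ∀ s, α s ≤ s) (v s : ℝ≥0) : α^[⌊s⌋₊ + 1] v ≤ interp α v s := by
  have h1 : ((⌊s⌋₊ : ℕ) : ℝ≥0) ≤ s := Nat.floor_le (zero_le)
  have h2 : s ≤ (⌊s⌋₊ : ℕ) + 1 := (Nat.lt_floor_add_one s).le
  have h3 := iterate_succ_le' hle v ⌊s⌋₊
  rw [← NNReal.coe_le_coe] at h1 h2 h3 ⊢
  rw [interp_real v s ⌊s⌋₊ (by exact_mod_cast h1) (by exact_mod_cast h2)]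
  push_cast at h1 h2
  nlinarith

theorem interp_antitone (hle : ∀ s, α s ≤ s) (v : ℝ≥0) : Antitone (interp α v) := by
  intro s t hst
  rcases (Nat.floor_mono hst).lt_or_eq with h | h
  · exact (interp_le hle v t).trans ((iterate_antitone' hle v h).trans (le_interp hle v s))
  · have h1 : ((⌊s⌋₊ : ℕ) : ℝ≥0) ≤ s := Nat.floor_le (zero_le)
    have h2 : t ≤ (⌊s⌋₊ : ℕ) + 1 := by rw [h]; exact (Nat.lt_floor_add_one t).le
    have h3 := iterate_succ_le' hle v ⌊s⌋₊
    have h4 := interp_real (α := α) v s ⌊s⌋₊ h1 (hst.trans h2)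
    have h5 := interp_real (α := α) v t ⌊s⌋₊ (h1.trans hst) h2
    rw [← NNReal.coe_le_coe] at h3 hst ⊢
    rw [h4, h5]
    nlinarith

theorem interp_tendsto (hc : Continuous α) (hle : ∀ s, α s ≤ s)
    (hlt : ∀ s, 0 < s → α s < s) (v : ℝ≥0) : Tendsto (interp α v) atTop (nhds 0) :=
  tendsto_of_tendsto_of_tendsto_of_le_of_le tendsto_const_nhds
    ((iterate_tendsto' hc hle hlt v).comp (tendsto_nat_floor_atTop (α := ℝ≥0)))
    (fun _ => zero_le) (fun s => interp_le hle v s)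

theorem interp_continuous (hc : Continuous α) :
    Continuous (fun p : ℝ≥0 × ℝ≥0 => interp α p.1 p.2) := by
  let F : ℕ → Set (ℝ≥0 × ℝ≥0) := fun k => Prod.snd ⁻¹' Set.Icc (k : ℝ≥0) ((k : ℝ≥0) + 1)
  have hlf : LocallyFinite F := by
    intro p
    obtain ⟨N, hN⟩ := exists_nat_gt p.2
    refine ⟨{q | q.2 < N}, (isOpen_lt continuous_snd continuous_const).mem_nhds hN, ?_⟩
    refine (Set.finite_lt_nat N).subset ?_
    rintro k ⟨q, hq1, hq2⟩
    have : (k : ℝ≥0) < N := lt_of_le_of_lt hq1.1 hq2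
    exact_mod_cast this
  refine hlf.continuous ?_ ?_ ?_
  · refine Set.eq_univ_of_forall fun p => Set.mem_iUnion.2 ⟨⌊p.2⌋₊, ?_⟩
    exact ⟨Nat.floor_le (zero_le), (Nat.lt_floor_add_one p.2).le⟩
  · intro k
    exact isClosed_Icc.preimage continuous_snd
  · intro k
    have hk := hc.iterate k
    have hk1 := hc.iterate (k + 1)
    have : Continuous fun p : ℝ≥0 × ℝ≥0 =>
        ((k : ℝ≥0) + 1 - p.2) * α^[k] p.1 + (p.2 - (k : ℝ≥0)) * α^[k + 1] p.1 :=
      ((continuous_const.sub continuous_snd).mul (hk.comp continuous_fst)).add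
        ((continuous_snd.sub continuous_const).mul (hk1.comp continuous_fst))
    exact this.continuousOn.congr fun p hp => interp_eq p.1 p.2 k hp.1 hp.2

theorem interp_continuous' {Y : Type} [TopologicalSpace Y] (hc : Continuous α)
    {f h : Y → ℝ≥0} (hf : Continuous f) (hh : Continuous h) :
    Continuous fun y => interp α (f y) (h y) := by
  have h1 := interp_continuous hc
  have h2 := hf.prodMk hh
  generalize interp α = G at *
  exact h1.comp h2

theorem interp_classK (hα : ClassK α) (s : ℝ≥0) : ClassK fun v => interp α v s := by
  refine ⟨interp_continuous' hα.1 continuous_id continuous_const, ?_, ?_⟩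
  · intro a b hab
    refine add_lt_add_of_lt_of_le ?_ ?_
    · refine mul_lt_mul_of_pos_left ((hα.iterate' _).2.1 hab) ?_
      exact tsub_pos_of_lt (Nat.lt_floor_add_one s)
    · exact mul_le_mul_right ((hα.iterate' _).2.1 hab).le _
  · simp only [interp, (hα.iterate' _).2.2, mul_zero, add_zero]

end interp

/-- Proposition: the multi-step MPC feedback `q̂` obtained from OCP-1 is an
admissible finite-step feedback control law and asymptotically ω-stabilizes `A = ω⁻¹(0)`. -/
theorem contractive_multistep_mpc_stabilizes {n m : ℕ}
    (X : Set (Fin n → ℝ)) (U : Set (Fin m → ℝ))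
    (g : (Fin n → ℝ) → (Fin m → ℝ) → (Fin n → ℝ))
    (hg : ContinuousOn (fun p : (Fin n → ℝ) × (Fin m → ℝ) => g p.1 p.2) (X ×ˢ U))
    (ω : (Fin n → ℝ) → ℝ≥0) (hω : Continuous ω) (hωzero : ∃ x, ω x = 0)
    (M : ℕ) (hM : 1 ≤ M)
    (V : (Fin n → ℝ) → ℝ≥0) (hV : Continuous V)
    (ulα olα : ℝ≥0 → ℝ≥0) (hulα : ClassKInf ulα) (holα : ClassKInf olα)
    (hsandwich : ∀ ξ, ulα (ω ξ) ≤ V ξ ∧ V ξ ≤ olα (ω ξ))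
    (q : (Fin n → ℝ) → ℕ → Fin m → ℝ) (hq : IsAfcl ω X U g M q)
    (α : ℝ≥0 → ℝ≥0) (hα : ClassKInf α) (hαlt : ∀ s : ℝ≥0, 0 < s → α s < s)
    (hdecay : ∀ ξ ∈ X, V (iter g ξ (q ξ) M) ≤ α (V ξ))
    -- the feedback `q̂` satisfies the constraints of OCP-1 …
    (qhat : (Fin n → ℝ) → ℕ → Fin m → ℝ)
    (hqhatU : ∀ ξ ∈ X, ∀ j < M, qhat ξ j ∈ U)
    (hqhatX : ∀ ξ ∈ X, ∀ j : ℕ, 1 ≤ j → j ≤ M → iter g ξ (qhat ξ) j ∈ X)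
    (hqhatcontr : ∀ ξ ∈ X, V (iter g ξ (qhat ξ) M) ≤ α (V ξ))
    -- … and dominates the cost of `q`
    (hqhatcost : ∀ ξ ∈ X,
      ∑ i ∈ Finset.range M, V (iter g ξ (qhat ξ) i) ≤
        ∑ i ∈ Finset.range M, V (iter g ξ (q ξ) i)) :
    -- then `q̂` is an afcl and asymptotically ω-stabilizes `A := ω⁻¹(0)`:
    IsAfcl ω X U g M qhat ∧
    ∃ β : ℝ≥0 → ℝ≥0 → ℝ≥0, ClassKL β ∧
      ∀ ξ ∈ X, ∀ t : ℕ, ω (closedLoop g M qhat ξ t) ≤ β (ω ξ) (t : ℝ≥0) := by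
  obtain ⟨ui, hui, hui1, hui2⟩ := hulα.exists_inv
  obtain ⟨ai, hai, hai1, hai2⟩ := hα.exists_inv
  have hωle : ∀ x c, V x ≤ c → ω x ≤ ui c := fun x c h => by
    rw [← hui1 (ω x)]
    exact hui.2.1.monotone ((hsandwich x).1.trans h)
  have hle : ∀ s, α s ≤ s := fun s => by
    rcases eq_or_ne s 0 with rfl | h
    · exact hα.1.2.2.le
    · exact (hαlt s (pos_iff_ne_zero.2 h)).le
  have hκ : ∀ j : ℕ, ∃ κ : ℝ≥0 → ℝ≥0, j < M → ClassK κ ∧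
      ∀ ξ ∈ X, ω (iter g ξ (q ξ) j) ≤ κ (ω ξ) := by
    intro j
    rcases Nat.eq_zero_or_pos j with rfl | hj
    · exact ⟨fun x => x, fun _ => ⟨⟨continuous_id, strictMono_id, rfl⟩, fun ξ _ => le_rfl⟩⟩
    · by_cases hjM : j < M
      · obtain ⟨κ, h⟩ := hq.2.2 j hj hjM.le
        exact ⟨κ, fun _ => h⟩
      · exact ⟨id, fun h => absurd h hjM⟩
  choose κ hκ using hκ
  let σ : ℝ≥0 → ℝ≥0 := fun x => ∑ i ∈ Finset.range M, olα (κ i x)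
  have hσ : ClassK σ := classK_sum hM (fun i x => olα (κ i x))
    fun i hi => holα.1.comp' (hκ i hi).1
  have hstep : ∀ ξ ∈ X, ∀ j < M, ω (iter g ξ (qhat ξ) j) ≤ ui (σ (ω ξ)) := by
    intro ξ hξ j hj
    apply hωle
    calc V (iter g ξ (qhat ξ) j)
        ≤ ∑ i ∈ Finset.range M, V (iter g ξ (qhat ξ) i) :=
          Finset.single_le_sum (f := fun i => V (iter g ξ (qhat ξ) i))
            (fun _ _ => zero_le) (Finset.mem_range.2 hj)
      _ ≤ ∑ i ∈ Finset.range M, V (iter g ξ (q ξ) i) := hqhatcost ξ hξ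
      _ ≤ σ (ω ξ) := Finset.sum_le_sum fun i hi =>
          ((hsandwich _).2).trans
            (holα.1.2.1.monotone ((hκ i (Finset.mem_range.1 hi)).2 ξ hξ))
  refine ⟨⟨hqhatU, hqhatX, ?_⟩, ?_⟩
  · intro j hj hjM
    rcases hjM.lt_or_eq with h | rfl
    · exact ⟨fun x => ui (σ x), hui.comp' hσ, fun ξ hξ => hstep ξ hξ j h⟩
    · refine ⟨fun x => ui (α (olα x)), hui.comp' (hα.1.comp' holα.1), fun ξ hξ => ?_⟩
      exact hωle _ _ ((hqhatcontr ξ hξ).trans (hα.1.2.1.monotone (hsandwich ξ).2))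
  · have hbX : ∀ ξ ∈ X, ∀ k, loopBase g M qhat ξ k ∈ X := by
      intro ξ hξ k
      induction k with
      | zero => exact hξ
      | succ k ih => exact hqhatX _ ih M hM le_rfl
    have hbV : ∀ ξ ∈ X, ∀ k, V (loopBase g M qhat ξ k) ≤ α^[k] (V ξ) := by
      intro ξ hξ k
      induction k with
      | zero => exact le_rfl
      | succ k ih =>
        rw [Function.iterate_succ_apply']
        exact (hqhatcontr _ (hbX ξ hξ k)).trans (hα.1.2.1.monotone ih)
    let φ : ℝ≥0 → ℝ≥0 := fun x => ui (σ (ui x))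
    have hφ : ClassK φ := hui.comp' (hσ.comp' hui)
    have hμ : ClassK fun r => ai (olα r) := hai.comp' holα.1
    have hM0 : (0 : ℝ≥0) < M := by exact_mod_cast hM
    refine ⟨fun r s => φ (interp α (ai (olα r)) (s / M)), ⟨?_, ?_, ?_⟩, ?_⟩
    · have hc2 : Continuous fun p : ℝ≥0 × ℝ≥0 => interp α (ai (olα p.1)) (p.2 / (M : ℝ≥0)) :=
        interp_continuous' hα.1.1 (hμ.1.comp continuous_fst) (continuous_snd.div_const _)
      exact hφ.1.comp hc2
    · intro s
      exact hφ.comp' ((interp_classK hα.1 (s / M)).comp' hμ)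
    · intro r
      refine ⟨fun s t hst => hφ.2.1.monotone (interp_antitone hle _ ?_), ?_⟩
      · gcongr
      · have h1 : Tendsto (fun s : ℝ≥0 => s / M) atTop atTop :=
          tendsto_id.atTop_div_const hM0
        have h2 := (interp_tendsto hα.1.1 hle hαlt (ai (olα r))).comp h1
        have h3 := (hφ.1.tendsto 0).comp h2
        rw [hφ.2.2] at h3
        exact h3
    · intro ξ hξ t
      have h1 := hstep _ (hbX ξ hξ (t / M)) (t % M) (Nat.mod_lt _ hM)
      refine h1.trans (hui.2.1.monotone (hσ.2.1.monotone (hωle _ _ ?_)))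
      refine (hbV ξ hξ (t / M)).trans ?_
      refine le_trans ?_ (le_interp hle _ _)
      rw [Nat.floor_div_eq_div, Function.iterate_succ_apply, hai2]
      exact (hα.1.iterate' _).2.1.monotone (hsandwich ξ).2
end
end

section
/- Let ω be a measurement function and V a finite-step control Lyapunov function for time step M with afcl q, decay function α ∈ K∞ with α(s) < s for s > 0, and transient bound V(g^i(ξ,q(ξ))) ≤ κ̂(V(ξ)) for all ξ ∈ X and i = 1,…,M−1, with κ̂ ∈ K∞. Then there exists ρ ∈ K∞ such that, if V is replaced by Ṽ := ρ ∘ V as the running cost, the classic MPC scheme (minimizing Σ_{i=0}^{N−1} Ṽ(x(i,ξ,u_N)) over admissible sequences and applying the first element of an optimal sequence at each time step) is semiglobally practically asymptotically ω-stabilizing in A := ω⁻¹(0) with respect to the optimization horizon N. -/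
open Filter Finset NNReal

noncomputable section

/-- A control sequence `u` of length `N` is admissible from `ξ`: all applied inputs
lie in `U` and the resulting states remain in `X`. -/
def Adm {n m : ℕ} (X : Set (Fin n → ℝ)) (U : Set (Fin m → ℝ))
    (g : (Fin n → ℝ) → (Fin m → ℝ) → (Fin n → ℝ)) (ξ : Fin n → ℝ) (N : ℕ)
    (u : ℕ → Fin m → ℝ) : Prop :=
  ∀ j < N, u j ∈ U ∧ iter g ξ u (j + 1) ∈ X

/-- The MPC cost functional `Σ_{i=0}^{N-1} V(x(i,ξ,u))`. -/
def cost {n m : ℕ} (V : (Fin n → ℝ) → ℝ≥0)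
    (g : (Fin n → ℝ) → (Fin m → ℝ) → (Fin n → ℝ)) (N : ℕ) (ξ : Fin n → ℝ)
    (u : ℕ → Fin m → ℝ) : ℝ≥0 :=
  ∑ i ∈ Finset.range N, V (iter g ξ u i)

/-- `uopt` is a selection of optimal control sequences for the horizon-`N`
optimal control problem with running cost `V`. -/
def IsOptSel {n m : ℕ} (X : Set (Fin n → ℝ)) (U : Set (Fin m → ℝ))
    (g : (Fin n → ℝ) → (Fin m → ℝ) → (Fin n → ℝ)) (V : (Fin n → ℝ) → ℝ≥0) (N : ℕ)
    (uopt : (Fin n → ℝ) → ℕ → Fin m → ℝ) : Prop :=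
  ∀ ξ ∈ X, Adm X U g ξ N (uopt ξ) ∧
    ∀ u : ℕ → Fin m → ℝ, Adm X U g ξ N u → cost V g N ξ (uopt ξ) ≤ cost V g N ξ u

/-- The MPC closed loop: at every time step apply the first element of the
(selected) optimal control sequence. -/
def mpcLoop {n m : ℕ} (g : (Fin n → ℝ) → (Fin m → ℝ) → (Fin n → ℝ))
    (uopt : (Fin n → ℝ) → ℕ → Fin m → ℝ) (ξ : Fin n → ℝ) : ℕ → Fin n → ℝ
  | 0 => ξ
  | t + 1 => g (mpcLoop g uopt ξ t) (uopt (mpcLoop g uopt ξ t) 0)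

lemma ClassKInf.comp' {f g : ℝ≥0 → ℝ≥0} (hf : ClassKInf f) (hg : ClassKInf g) :
    ClassKInf (fun s => f (g s)) :=
  ⟨⟨hf.1.1.comp hg.1.1, hf.1.2.1.comp hg.1.2.1, by simp only [hg.1.2.2, hf.1.2.2]⟩, hf.2.comp hg.2⟩

lemma ClassKInf.add' {f g : ℝ≥0 → ℝ≥0} (hf : ClassKInf f) (hg : ClassKInf g) :
    ClassKInf (fun s => f s + g s) :=
  ⟨⟨hf.1.1.add hg.1.1, hf.1.2.1.add hg.1.2.1, by simp [hg.1.2.2, hf.1.2.2]⟩,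
    tendsto_atTop_mono (fun s => le_self_add) hf.2⟩

lemma classKInf_mul (c : ℝ≥0) (hc : 0 < c) : ClassKInf (fun s => c * s) :=
  ⟨⟨by fun_prop, fun a b h => mul_lt_mul_of_pos_left h hc, by simp⟩,
    Tendsto.const_mul_atTop hc tendsto_id⟩

lemma classKInf_id : ClassKInf (fun s => s) :=
  ⟨⟨continuous_id, strictMono_id, rfl⟩, tendsto_id⟩

lemma ClassKInf.pos {f : ℝ≥0 → ℝ≥0} (hf : ClassKInf f) {s : ℝ≥0} (hs : 0 < s) : 0 < f s := by
  have := hf.1.2.1 hs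
  rwa [hf.1.2.2] at this

lemma ClassKInf.inv' {f : ℝ≥0 → ℝ≥0} (hf : ClassKInf f) :
    ∃ g : ℝ≥0 → ℝ≥0, ClassKInf g ∧ (∀ s, f (g s) = s) ∧ (∀ s, g (f s) = s) := by
  have hsurj : Function.Surjective f := by
    apply hf.1.1.surjective hf.2
    rw [OrderBot.atBot_eq]
    rw [tendsto_pure_left]
    intro s hs
    have : f ⊥ = ⊥ := hf.1.2.2
    rw [this]
    simpa using hs
  let e := StrictMono.orderIsoOfSurjective f hf.1.2.1 hsurj
  have h1 : ∀ s, f (e.symm s) = s := fun s => e.apply_symm_apply s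
  have h2 : ∀ s, e.symm (f s) = s := fun s => e.symm_apply_apply s
  refine ⟨e.symm, ⟨⟨e.symm.continuous, e.symm.strictMono, ?_⟩, e.symm.tendsto_atTop⟩, h1, h2⟩
  have := h2 0
  rwa [hf.1.2.2] at this

lemma series_cont_mono (f : ℕ → ℝ≥0 → ℝ) (hc : ∀ k, Continuous (f k))
    (hm : ∀ k, Monotone (f k)) (h0 : ∀ k s, 0 ≤ f k s) (hs : ∀ R, Summable (fun k => f k R)) :
    Continuous (fun s => ∑' k, f k s) ∧ Monotone (fun s => ∑' k, f k s) := by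
  constructor
  · rw [continuous_iff_continuousAt]
    intro x
    have : ContinuousOn (fun s => ∑' k, f k s) (Set.Iio (x + 1)) := by
      refine continuousOn_tsum (u := fun k => f k (x + 1)) (fun k => (hc k).continuousOn) (hs _) ?_
      intro k s hk
      rw [Real.norm_of_nonneg (h0 _ _)]
      exact hm k (le_of_lt hk)
    exact this.continuousAt (Iio_mem_nhds (by simp))
  · intro a b hab
    exact (hs a).tsum_le_tsum (fun k => hm k hab) (hs b)

lemma iterate_tendsto_zero (T : ℝ≥0 → ℝ≥0) (hT : Continuous T) (hT0 : T 0 = 0)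
    (hlt : ∀ s, 0 < s → T s < s) (R : ℝ≥0) :
    Tendsto (fun k => T^[k] R) atTop (nhds 0) := by
  have hle : ∀ s, T s ≤ s := by
    intro s
    rcases eq_zero_or_pos s with h | h
    · simp [h, hT0]
    · exact (hlt s h).le
  have hanti : Antitone (fun k => T^[k] R) := by
    apply antitone_nat_of_succ_le
    intro k
    rw [Function.iterate_succ_apply']
    exact hle _
  have hlim := tendsto_atTop_ciInf hanti (OrderBot.bddBelow _)
  have hfix := isFixedPt_of_tendsto_iterate hlim hT.continuousAt
  rcases eq_zero_or_pos (⨅ k, T^[k] R) with h | h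
  · rwa [h] at hlim
  · exact absurd hfix (hlt _ h).ne

/-- The key rescaling lemma. -/
lemma exists_halving (T : ℝ≥0 → ℝ≥0) (hT : Continuous T) (hTm : Monotone T) (hT0 : T 0 = 0)
    (hlt : ∀ s, 0 < s → T s < s) :
    ∃ ρ : ℝ≥0 → ℝ≥0, ClassKInf ρ ∧ ∀ s, 2 * ρ (T s) ≤ ρ s := by
  let a : ℕ → ℝ := fun n => 1 / ((n : ℝ) + 1)
  have ha : ∀ n, 0 < a n := fun n => by positivity
  let f : ℕ → ℕ → ℝ≥0 → ℝ := fun n k s => 2 ^ k * max (((T^[k] s : ℝ≥0) : ℝ) - a n) 0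
  have fc : ∀ n k, Continuous (f n k) := by
    intro n k
    have := hT.iterate k
    fun_prop
  have fm : ∀ n k, Monotone (f n k) := by
    intro n k x y hxy
    have : ((T^[k] x : ℝ≥0) : ℝ) ≤ (T^[k] y : ℝ≥0) := by exact_mod_cast hTm.iterate k hxy
    simp only [f]
    gcongr
  have f0 : ∀ n k s, 0 ≤ f n k s := by
    intro n k s
    simp only [f]
    positivity
  have fs : ∀ n R, Summable (fun k => f n k R) := by
    intro n R
    have h := iterate_tendsto_zero T hT hT0 hlt R
    have h' : Tendsto (fun k => ((T^[k] R : ℝ≥0) : ℝ)) atTop (nhds 0) :=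
      NNReal.tendsto_coe.2 h
    have he := h'.eventually (gt_mem_nhds (ha n))
    obtain ⟨K, hK⟩ := eventually_atTop.1 he
    apply summable_of_ne_finset_zero (s := Finset.range K)
    intro k hk
    have : K ≤ k := by simpa using hk
    have := hK k this
    simp only [f]
    rw [max_eq_right (by linarith), mul_zero]
  let p : ℕ → ℝ≥0 → ℝ := fun n s => ∑' k, f n k s
  have pcm : ∀ n, Continuous (p n) ∧ Monotone (p n) := fun n =>
    series_cont_mono (f n) (fc n) (fm n) (f0 n) (fs n)
  have p0 : ∀ n s, 0 ≤ p n s := fun n s => tsum_nonneg (fun k => f0 n k s)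
  have f00 : ∀ n k, f n k 0 = 0 := by
    intro n k
    have : T^[k] 0 = 0 := Function.iterate_fixed hT0 k
    simp only [f]
    rw [this, max_eq_right (by simpa using (ha n).le), mul_zero]
  have pT : ∀ n s, 2 * p n (T s) ≤ p n s := by
    intro n s
    have h1 : p n s = f n 0 s + ∑' k, f n (k + 1) s := (fs n s).tsum_eq_zero_add
    have h2 : ∑' k, f n (k + 1) s = 2 * p n (T s) := by
      simp only [p]
      rw [← _root_.tsum_mul_left]
      congr 1
      ext k
      simp only [f, Function.iterate_succ_apply]
      ring
    have := f0 n 0 s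
    linarith
  have pstr : ∀ (n : ℕ) (x y : ℝ≥0), x < y → a n < (y : ℝ) → p n x < p n y := by
    intro n x y hxy hy
    refine (fs n x).tsum_lt_tsum (i := 0) (fun k => fm n k hxy.le) ?_ (fs n y)
    simp only [f, Function.iterate_zero, id, pow_zero, one_mul]
    have : (x : ℝ) < y := by exact_mod_cast hxy
    rw [max_eq_left (by linarith : (0:ℝ) ≤ (y:ℝ) - a n)]
    exact max_lt (by linarith) (by linarith)
  let c : ℕ → ℝ := fun n => (1 / 2) ^ n / (1 + p n n)
  have hcpos : ∀ n, 0 < c n := fun n => by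
    have := p0 n n
    simp only [c]
    positivity
  let F : ℕ → ℝ≥0 → ℝ := fun n s => c n * p n s
  have Fm : ∀ n, Monotone (F n) := fun n x y h =>
    mul_le_mul_of_nonneg_left ((pcm n).2 h) (hcpos n).le
  have F0 : ∀ n s, 0 ≤ F n s := fun n s => mul_nonneg (hcpos n).le (p0 n s)
  have Fs : ∀ R, Summable (fun n => F n R) := by
    intro R
    refine Summable.of_norm_bounded_eventually_nat summable_geometric_two ?_
    filter_upwards [eventually_ge_atTop ⌈R⌉₊] with n hn
    rw [Real.norm_of_nonneg (F0 _ _)]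
    have h1 : R ≤ n := (Nat.le_ceil R).trans (by exact_mod_cast hn)
    have h2 := (pcm n).2 h1
    have h3 := p0 n n
    simp only [F, c]
    rw [div_mul_eq_mul_div, div_le_iff₀ (by positivity)]
    have h4 : (0:ℝ) < (1/2)^n := by positivity
    apply mul_le_mul_of_nonneg_left _ h4.le
    linarith
  obtain ⟨Gc, Gm⟩ := series_cont_mono F (fun n => continuous_const.mul (pcm n).1) Fm F0 Fs
  set G : ℝ≥0 → ℝ := fun s => ∑' n, F n s with hG
  have G0 : ∀ s, 0 ≤ G s := fun s => tsum_nonneg (fun k => F0 k s)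
  have Gz : G 0 = 0 := by simp [hG, F, p, f00]
  have GT : ∀ s, 2 * G (T s) ≤ G s := by
    intro s
    simp only [hG]
    rw [← _root_.tsum_mul_left]
    refine ((Fs (T s)).mul_left 2).tsum_le_tsum (fun n => ?_) (Fs s)
    have := mul_le_mul_of_nonneg_left (pT n s) (hcpos n).le
    simp only [F]
    linarith
  have Gs : StrictMono G := by
    intro x y hxy
    have hy : (0:ℝ) < y := by exact_mod_cast (zero_le.trans_lt hxy)
    obtain ⟨n, hn⟩ := exists_nat_one_div_lt hy
    exact (Fs x).tsum_lt_tsum (i := n) (fun k => Fm k hxy.le)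
      (mul_lt_mul_of_pos_left (pstr n x y hxy hn) (hcpos n)) (Fs y)
  have Glow : ∀ s : ℝ≥0, c 0 * ((s : ℝ) - 1) ≤ G s := by
    intro s
    have h1 : F 0 s ≤ G s := (Fs s).le_tsum 0 (fun k _ => F0 k s)
    have h2 : f 0 0 s ≤ p 0 s := (fs 0 s).le_tsum 0 (fun k _ => f0 0 k s)
    have h3 : (s : ℝ) - 1 ≤ f 0 0 s := by simp [f, a]
    exact (mul_le_mul_of_nonneg_left (h3.trans h2) (hcpos 0).le).trans h1
  have Gtop : Tendsto G atTop atTop := by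
    refine tendsto_atTop_mono Glow ?_
    refine Tendsto.const_mul_atTop (hcpos 0) ?_
    exact tendsto_atTop_add_const_right _ _ (NNReal.tendsto_coe_atTop.2 tendsto_id)
  have hco : ∀ s, ((G s).toNNReal : ℝ) = G s := fun s => Real.coe_toNNReal _ (G0 s)
  refine ⟨fun s => (G s).toNNReal, ⟨⟨?_, ?_, ?_⟩, ?_⟩, ?_⟩
  · exact continuous_real_toNNReal.comp Gc
  · intro x y h
    rw [← NNReal.coe_lt_coe, hco, hco]
    exact Gs h
  · simp [Gz]
  · rw [← NNReal.tendsto_coe_atTop]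
    simpa only [hco] using Gtop
  · intro s
    rw [← NNReal.coe_le_coe, NNReal.coe_mul, hco, hco]
    exact GT s

section concat
variable {n m : ℕ} (g : (Fin n → ℝ) → (Fin m → ℝ) → (Fin n → ℝ))

def catSeq (j : ℕ) (u v : ℕ → Fin m → ℝ) : ℕ → Fin m → ℝ :=
  fun i => if i < j then u i else v (i - j)

lemma iter_cat_le (ξ : Fin n → ℝ) (j : ℕ) (u v : ℕ → Fin m → ℝ) (i : ℕ) (hi : i ≤ j) :
    iter g ξ (catSeq j u v) i = iter g ξ u i := by
  induction i with
  | zero => rfl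
  | succ i ih =>
    have : i < j := hi
    simp only [iter]
    rw [ih this.le]
    simp [catSeq, this]

lemma iter_cat_add (ξ : Fin n → ℝ) (j : ℕ) (u v : ℕ → Fin m → ℝ) (i : ℕ) :
    iter g ξ (catSeq j u v) (j + i) = iter g (iter g ξ u j) v i := by
  induction i with
  | zero => exact iter_cat_le g ξ j u v j le_rfl
  | succ i ih =>
    rw [← add_assoc]
    simp only [iter]
    rw [ih]
    simp [catSeq]

lemma cost_cat (W : (Fin n → ℝ) → ℝ≥0) (ξ : Fin n → ℝ) (j k : ℕ) (u v : ℕ → Fin m → ℝ) :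
    cost W g (j + k) ξ (catSeq j u v) = cost W g j ξ u + cost W g k (iter g ξ u j) v := by
  unfold cost
  rw [Finset.sum_range_add]
  congr 1
  · apply Finset.sum_congr rfl
    intro i hi
    rw [iter_cat_le g ξ j u v i (Finset.mem_range.1 hi).le]
  · apply Finset.sum_congr rfl
    intro i hi
    rw [iter_cat_add]

lemma adm_cat (X : Set (Fin n → ℝ)) (U : Set (Fin m → ℝ)) (ξ : Fin n → ℝ) (j k : ℕ)
    (u v : ℕ → Fin m → ℝ) (hu : Adm X U g ξ j u) (hv : Adm X U g (iter g ξ u j) k v) :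
    Adm X U g ξ (j + k) (catSeq j u v) := by
  intro i hi
  by_cases h : i < j
  · rw [iter_cat_le g ξ j u v (i + 1) h]
    simpa [catSeq, h] using hu i h
  · obtain ⟨l, rfl⟩ := Nat.exists_eq_add_of_le (not_lt.1 h)
    rw [add_assoc, iter_cat_add]
    simpa [catSeq] using hv l (by omega)

lemma iter_shift (ξ : Fin n → ℝ) (u : ℕ → Fin m → ℝ) (i : ℕ) :
    iter g (iter g ξ u 1) (fun k => u (k + 1)) i = iter g ξ u (i + 1) := by
  induction i with
  | zero => rfl
  | succ i ih =>
    rw [iter, ih]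
    rfl

lemma cost_mono (W : (Fin n → ℝ) → ℝ≥0) (ξ : Fin n → ℝ) (u : ℕ → Fin m → ℝ) {j k : ℕ}
    (h : j ≤ k) : cost W g j ξ u ≤ cost W g k ξ u :=
  Finset.sum_le_sum_of_subset (Finset.range_mono h)

/-- Finite-horizon controllability bound. -/
lemma exists_cheap (X : Set (Fin n → ℝ)) (U : Set (Fin m → ℝ)) (W D : (Fin n → ℝ) → ℝ≥0) (M : ℕ)
    (hM : 1 ≤ M) (q : (Fin n → ℝ) → ℕ → Fin m → ℝ)
    (hqa : ∀ ξ ∈ X, Adm X U g ξ M (q ξ))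
    (hD : ∀ ξ ∈ X, 2 * D (iter g ξ (q ξ) M) ≤ D ξ)
    (hW : ∀ ξ ∈ X, ∀ i < M, W (iter g ξ (q ξ) i) ≤ D ξ) (N : ℕ) :
    ∀ ξ ∈ X, ∃ u, Adm X U g ξ N u ∧ cost W g N ξ u ≤ 2 * M * D ξ := by
  have key : ∀ K : ℕ, ∀ ξ ∈ X, ∃ u, Adm X U g ξ (K * M) u ∧
      cost W g (K * M) ξ u ≤ 2 * M * D ξ := by
    intro K
    induction K with
    | zero =>
      intro ξ _
      exact ⟨q ξ, by intro j hj; simp at hj, by simp [cost]⟩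
    | succ K ih =>
      intro ξ hξ
      have hX : iter g ξ (q ξ) M ∈ X := by
        have := (hqa ξ hξ (M - 1) (by omega)).2
        rwa [Nat.sub_add_cancel hM] at this
      obtain ⟨u, hu, hc⟩ := ih _ hX
      refine ⟨catSeq M (q ξ) u, ?_, ?_⟩
      · rw [add_mul, one_mul, add_comm]
        exact adm_cat g X U ξ _ _ _ _ (hqa ξ hξ) hu
      · rw [add_mul, one_mul, add_comm, cost_cat]
        have h1 : cost W g M ξ (q ξ) ≤ M * D ξ := by
          unfold cost
          refine (Finset.sum_le_card_nsmul _ _ (D ξ) ?_).trans (by simp)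
          intro i hi
          exact hW ξ hξ i (Finset.mem_range.1 hi)
        calc _ ≤ M * D ξ + 2 * M * D (iter g ξ (q ξ) M) := add_le_add h1 hc
          _ = M * D ξ + M * (2 * D (iter g ξ (q ξ) M)) := by ring
          _ ≤ M * D ξ + M * D ξ := by
            gcongr
            exact hD ξ hξ
          _ = _ := by ring
  intro ξ hξ
  obtain ⟨u, hu, hc⟩ := key N ξ hξ
  have hN : N ≤ N * M := Nat.le_mul_of_pos_right N hM
  exact ⟨u, fun j hj => hu j (by omega), (cost_mono g W ξ u hN).trans hc⟩

/-- One step of the MPC loop. -/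
lemma mpc_step (X : Set (Fin n → ℝ)) (U : Set (Fin m → ℝ)) (W : (Fin n → ℝ) → ℝ≥0)
    (B : ℝ≥0 → ℝ≥0) (hB : Monotone B)
    (hcheap : ∀ N : ℕ, ∀ ξ ∈ X, ∃ u, Adm X U g ξ N u ∧ cost W g N ξ u ≤ B (W ξ))
    (N : ℕ) (uo : (Fin n → ℝ) → ℕ → Fin m → ℝ) (ho : IsOptSel X U g W (N + 1) uo)
    (w : ℝ≥0) (ξ : Fin n → ℝ) (hξ : ξ ∈ X) (hN : cost W g (N + 1) ξ (uo ξ) ≤ N * w)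
    (hN1 : 1 ≤ N) :
    iter g ξ (uo ξ) 1 ∈ X ∧
    cost W g (N + 1) (iter g ξ (uo ξ) 1) (uo (iter g ξ (uo ξ) 1)) + W ξ ≤
      cost W g (N + 1) ξ (uo ξ) + B w := by
  have hadm := (ho ξ hξ).1
  have hX1 : iter g ξ (uo ξ) 1 ∈ X := (hadm 0 (by omega)).2
  refine ⟨hX1, ?_⟩
  have hsum : cost W g (N + 1) ξ (uo ξ) =
      ∑ i ∈ Finset.range N, W (iter g ξ (uo ξ) (i + 1)) + W ξ := by
    unfold cost
    rw [Finset.sum_range_succ']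
    rfl
  obtain ⟨i, hi, hiw⟩ : ∃ i ∈ Finset.range N, W (iter g ξ (uo ξ) (i + 1)) ≤ w := by
    apply Finset.exists_le_of_sum_le (by simpa using by omega)
    rw [Finset.sum_const, Finset.card_range, nsmul_eq_mul]
    refine le_trans ?_ hN
    rw [hsum]
    exact le_self_add
  have hi' : i < N := Finset.mem_range.1 hi
  set x1 := iter g ξ (uo ξ) 1 with hx1
  set sh : ℕ → Fin m → ℝ := fun k => uo ξ (k + 1) with hsh
  have hshift : ∀ k, iter g x1 sh k = iter g ξ (uo ξ) (k + 1) := iter_shift g ξ (uo ξ)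
  have hXi : iter g x1 sh i ∈ X := by
    rw [hshift]
    exact (hadm i (by omega)).2
  obtain ⟨v, hv, hvc⟩ := hcheap (N + 1 - i) _ hXi
  have hA : Adm X U g x1 (i + (N + 1 - i)) (catSeq i sh v) := by
    refine adm_cat g X U x1 _ _ _ _ ?_ hv
    intro k hk
    rw [hshift]
    exact hadm (k + 1) (by omega)
  have hC := cost_cat g W x1 i (N + 1 - i) sh v
  have hNi : i + (N + 1 - i) = N + 1 := by omega
  rw [hNi] at hA hC
  have h1 := (ho x1 hX1).2 _ hA
  have h2 : cost W g i x1 sh + W ξ ≤ cost W g (N + 1) ξ (uo ξ) := by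
    rw [hsum]
    gcongr
    unfold cost
    simp only [hshift]
    exact Finset.sum_le_sum_of_subset (Finset.range_mono hi'.le)
  rw [hshift] at hvc hC
  calc _ ≤ (cost W g i x1 sh + B (W (iter g ξ (uo ξ) (i + 1)))) + W ξ := by
        gcongr
        rw [hC] at h1
        exact h1.trans (by gcongr)
    _ ≤ (cost W g i x1 sh + B w) + W ξ := by
        gcongr
        exact hB hiw
    _ = (cost W g i x1 sh + W ξ) + B w := by ring
    _ ≤ _ := by gcongr

end concat

/-- (Theorem (iii): there exists a rescaling `ρ ∈ K∞` such that the classic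
MPC scheme with running cost `Ṽ = ρ ∘ V` is semiglobally practically asymptotically
ω-stabilizing w.r.t. the optimization horizon `N`). -/
theorem mpc_rescaled_cost_practically_stable {n m : ℕ}
    (X : Set (Fin n → ℝ)) (U : Set (Fin m → ℝ))
    (g : (Fin n → ℝ) → (Fin m → ℝ) → (Fin n → ℝ))
    (hg : ContinuousOn (fun p : (Fin n → ℝ) × (Fin m → ℝ) => g p.1 p.2) (X ×ˢ U))
    (ω : (Fin n → ℝ) → ℝ≥0) (hω : Continuous ω) (hωzero : ∃ x, ω x = 0)
    (M : ℕ) (hM : 1 ≤ M)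
    (V : (Fin n → ℝ) → ℝ≥0) (hV : Continuous V)
    (ulα olα : ℝ≥0 → ℝ≥0) (hulα : ClassKInf ulα) (holα : ClassKInf olα)
    (hsandwich : ∀ ξ, ulα (ω ξ) ≤ V ξ ∧ V ξ ≤ olα (ω ξ))
    (q : (Fin n → ℝ) → ℕ → Fin m → ℝ) (hq : IsAfcl ω X U g M q)
    (α : ℝ≥0 → ℝ≥0) (hα : ClassKInf α) (hαlt : ∀ s : ℝ≥0, 0 < s → α s < s)
    (hdecay : ∀ ξ ∈ X, V (iter g ξ (q ξ) M) ≤ α (V ξ))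
    -- transient bound `V(g^i(ξ,q(ξ))) ≤ κ̂(V(ξ))` with `κ̂ ∈ K∞`
    (κhat : ℝ≥0 → ℝ≥0) (hκhat : ClassKInf κhat)
    (htransient : ∀ ξ ∈ X, ∀ i : ℕ, 1 ≤ i → i < M → V (iter g ξ (q ξ) i) ≤ κhat (V ξ)) :
    -- there exists `ρ ∈ K∞` such that MPC with running cost `Ṽ = ρ ∘ V` is semiglobally
    -- practically asymptotically ω-stabilizing w.r.t. the optimization horizon `N`:
    ∃ ρ : ℝ≥0 → ℝ≥0, ClassKInf ρ ∧
      ∀ uopt : ℕ → (Fin n → ℝ) → ℕ → Fin m → ℝ,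
        (∀ N : ℕ, 1 ≤ N → IsOptSel X U g (fun x => ρ (V x)) N (uopt N)) →
        ∃ β : ℝ≥0 → ℝ≥0 → ℝ≥0, ClassKL β ∧
          ∀ δ : ℝ≥0, 0 < δ → ∀ Δ : ℝ≥0, δ < Δ → ∃ N₀ : ℕ, 1 ≤ N₀ ∧
            ∀ N : ℕ, N₀ ≤ N → ∀ ξ ∈ X, ω ξ < Δ →
              ∀ t : ℕ, ω (mpcLoop g (uopt N) ξ t) ≤ max (β (ω ξ) (t : ℝ≥0)) δ := by
  obtain ⟨hqU, hqX, -⟩ := hq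
  -- the rescaling
  obtain ⟨r, hr, hrα⟩ := exists_halving α hα.1.1 hα.1.2.1.monotone hα.1.2.2 hαlt
  have hσ : ClassKInf (fun s => s + κhat s) := classKInf_id.add' hκhat
  obtain ⟨σi, hσi, hσ1, hσ2⟩ := hσ.inv'
  have hρ : ClassKInf (fun s => r (σi s)) := hr.comp' hσi
  obtain ⟨ρ, hρdef⟩ : ∃ ρ : ℝ≥0 → ℝ≥0, ρ = fun s => r (σi s) := ⟨_, rfl⟩
  rw [← hρdef] at hρ
  refine ⟨ρ, hρ, ?_⟩
  intro uopt hopt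
  obtain ⟨ρi, hρi, hρ1, hρ2⟩ := hρ.inv'
  set W : (Fin n → ℝ) → ℝ≥0 := fun x => ρ (V x) with hWdef
  have hMpos : (0 : ℝ≥0) < 2 * M := by
    have : (0 : ℝ≥0) < M := by exact_mod_cast hM
    positivity
  obtain ⟨B, hBdef⟩ : ∃ B : ℝ≥0 → ℝ≥0, B = fun w => 2 * M * r (ρi w) := ⟨_, rfl⟩
  have hB : ClassKInf B := by
    rw [hBdef]
    exact (classKInf_mul _ hMpos).comp' (hr.comp' hρi)
  have hρκ : ∀ s, ρ (s + κhat s) = r s := by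
    intro s
    rw [hρdef]
    simp only
    rw [hσ2 s]
  have hcheap : ∀ N : ℕ, ∀ ξ ∈ X, ∃ u, Adm X U g ξ N u ∧ cost W g N ξ u ≤ B (W ξ) := by
    intro N ξ hξ
    obtain ⟨u, hu, hc⟩ := exists_cheap g X U W (fun x => r (V x)) M hM q
      (fun ξ hξ j hj => ⟨hqU ξ hξ j hj, hqX ξ hξ (j + 1) (by omega) hj⟩)
      (fun ξ hξ => le_trans (by gcongr; exact hr.1.2.1.monotone (hdecay ξ hξ)) (hrα (V ξ)))
      (by
        intro ξ hξ i hi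
        simp only [hWdef]
        rw [← hρκ]
        apply hρ.1.2.1.monotone
        rcases Nat.eq_zero_or_pos i with h | h
        · subst h
          exact le_self_add
        · exact (htransient ξ hξ i h hi).trans le_add_self) N ξ hξ
    refine ⟨u, hu, ?_⟩
    rw [hBdef]
    simp only [hWdef, hρ2]
    exact hc
  -- comparison map
  obtain ⟨θ, hθ, hθ1, hθ2⟩ := (hB.add' classKInf_id).inv'
  have hTK : ClassKInf (fun y => B (θ y) + (1 / 2) * θ y) :=
    (hB.comp' hθ).add' ((classKInf_mul _ (by norm_num)).comp' hθ)
  obtain ⟨T, hTdef⟩ : ∃ T : ℝ≥0 → ℝ≥0, T = fun y => B (θ y) + (1 / 2) * θ y := ⟨_, rfl⟩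
  rw [← hTdef] at hTK
  have hTlt : ∀ s, 0 < s → T s < s := by
    intro s hs
    have h1 : B (θ s) + θ s = s := hθ1 s
    have h2 := hθ.pos hs
    rw [hTdef]
    simp only
    conv_rhs => rw [← h1]
    gcongr
    rw [← NNReal.coe_lt_coe]
    rw [← NNReal.coe_pos] at h2
    push_cast
    linarith
  have hTle : ∀ s, T s ≤ s := by
    intro s
    rcases eq_zero_or_pos s with h | h
    · simp [h, hTK.1.2.2]
    · exact (hTlt s h).le
  obtain ⟨χ, hχ, hχT⟩ := exists_halving T hTK.1.1 hTK.1.2.1.monotone hTK.1.2.2 hTlt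
  have hΦ : ClassKInf (fun s => χ (ρ (ulα s))) := hχ.comp' (hρ.comp' hulα)
  have hΨ : ClassKInf (fun s => χ (B (ρ (olα s)))) := hχ.comp' (hB.comp' (hρ.comp' holα))
  obtain ⟨Φi, hΦi, hΦ1, hΦ2⟩ := hΦ.inv'
  refine ⟨fun a s => Φi ((1 / 2 : ℝ≥0) ^ (s : ℝ) * χ (B (ρ (olα a)))), ⟨?_, ?_, ?_⟩, ?_⟩
  · apply hΦi.1.1.comp
    apply Continuous.mul
    · rw [continuous_iff_continuousAt]
      intro p
      have hf : Continuous (fun p : ℝ≥0 × ℝ≥0 => ((1 / 2 : ℝ≥0), (p.2 : ℝ))) := by fun_prop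
      exact ContinuousAt.comp (f := fun p : ℝ≥0 × ℝ≥0 => ((1 / 2 : ℝ≥0), (p.2 : ℝ)))
        (NNReal.continuousAt_rpow (Or.inl (by norm_num))) hf.continuousAt
    · exact hΨ.1.1.comp continuous_fst
  · intro s
    have hp : (0 : ℝ≥0) < (1 / 2 : ℝ≥0) ^ (s : ℝ) := NNReal.rpow_pos (by norm_num)
    exact (hΦi.comp' ((classKInf_mul _ hp).comp' hΨ)).1
  · intro a
    constructor
    · intro s t hst
      apply hΦi.1.2.1.monotone
      gcongr ?_ * _
      exact NNReal.rpow_le_rpow_of_exponent_ge (by norm_num) (by norm_num) (by exact_mod_cast hst)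
    · have h1 : Tendsto (fun s : ℝ≥0 => (1 / 2 : ℝ≥0) ^ (s : ℝ)) atTop (nhds 0) := by
        rw [← NNReal.tendsto_coe]
        push_cast
        exact (tendsto_rpow_atTop_of_base_lt_one (1 / 2) (by norm_num) (by norm_num)).comp
          (NNReal.tendsto_coe_atTop.2 tendsto_id)
      have h2 := h1.mul_const (χ (B (ρ (olα a))))
      rw [zero_mul] at h2
      have h3 := (hΦi.1.1.tendsto 0).comp h2
      rwa [hΦi.1.2.2] at h3
  intro δ hδ Δ hΔ
  set η := ρ (ulα δ) with hη
  have hηpos : 0 < η := hρ.pos (hulα.pos hδ)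
  -- choice of ε
  have hκ : ClassKInf (fun e => B (2 * e) + 3 * e) :=
    (hB.comp' (classKInf_mul 2 (by norm_num))).add' (classKInf_mul 3 (by norm_num))
  obtain ⟨κi, hκi, hκ1, -⟩ := hκ.inv'
  set ε := κi η with hε
  have hεpos : 0 < ε := hκi.pos hηpos
  have hεη : B (2 * ε) + 3 * ε = η := hκ1 η
  obtain ⟨Bi, hBi, hB1, -⟩ := hB.inv'
  set w := Bi ε with hw
  have hwpos : 0 < w := hBi.pos hεpos
  have hBw : B w = ε := hB1 ε
  set R := max (B (ρ (olα Δ))) η with hR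
  refine ⟨⌈R / w⌉₊ + 2, by omega, ?_⟩
  intro N' hN' ξ hξ hωξ t
  obtain ⟨N, rfl⟩ : ∃ N, N' = N + 1 := ⟨N' - 1, by omega⟩
  have hRN : R ≤ N * w := by
    have h1 : R / w ≤ (N : ℝ≥0) := (Nat.le_ceil _).trans (by exact_mod_cast (by omega))
    rwa [div_le_iff₀ hwpos] at h1
  have ho := hopt (N + 1) (by omega)
  set uo := uopt (N + 1) with huo
  set Y : (Fin n → ℝ) → ℝ≥0 := fun x => cost W g (N + 1) x (uo x) with hY
  have hYB : ∀ x ∈ X, Y x ≤ B (W x) := by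
    intro x hx
    obtain ⟨u, hu, hc⟩ := hcheap (N + 1) x hx
    exact ((ho x hx).2 u hu).trans hc
  have hWY : ∀ x, W x ≤ Y x := by
    intro x
    simp only [hY, cost]
    rw [Finset.sum_range_succ']
    exact le_add_self
  have hstep : ∀ x ∈ X, Y x ≤ R → iter g x (uo x) 1 ∈ X ∧
      Y (iter g x (uo x) 1) ≤ max (T (Y x)) η := by
    intro x hx hxR
    obtain ⟨h1, h2⟩ := mpc_step g X U W B hB.1.2.1.monotone hcheap N uo ho w x hx
      (hxR.trans hRN) (by omega)
    refine ⟨h1, ?_⟩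
    rw [hBw] at h2
    have h2' : Y (iter g x (uo x) 1) + W x ≤ Y x + ε := h2
    have h3 : θ (Y x) ≤ W x := by
      rw [← hθ2 (W x)]
      exact hθ.1.2.1.monotone ((hYB x hx).trans le_self_add)
    have h4 : B (θ (Y x)) + θ (Y x) = Y x := hθ1 (Y x)
    rw [le_max_iff]
    rcases le_total (2 * ε) (θ (Y x)) with h | h
    · left
      rw [hTdef]
      simp only
      rw [← NNReal.coe_le_coe] at *
      rw [← NNReal.coe_inj] at h4
      push_cast at *
      linarith
    · right
      have h5 := hB.1.2.1.monotone h
      rw [← hεη]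
      rw [← NNReal.coe_le_coe] at *
      rw [← NNReal.coe_inj] at h4
      have h6 : (0:ℝ) ≤ W x := NNReal.coe_nonneg _
      push_cast at *
      linarith
  have hmain : ∀ t, mpcLoop g uo ξ t ∈ X ∧ Y (mpcLoop g uo ξ t) ≤ R ∧
      χ (Y (mpcLoop g uo ξ t)) ≤ max ((1 / 2) ^ t * χ (B (ρ (olα (ω ξ))))) (χ η) := by
    intro t
    induction t with
    | zero =>
      have h1 : Y ξ ≤ B (ρ (olα (ω ξ))) :=
        (hYB ξ hξ).trans (hB.1.2.1.monotone (hρ.1.2.1.monotone (hsandwich ξ).2))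
      refine ⟨hξ, ?_, ?_⟩
      · refine h1.trans (le_max_of_le_left ?_)
        exact hB.1.2.1.monotone (hρ.1.2.1.monotone (holα.1.2.1.monotone hωξ.le))
      · rw [pow_zero, one_mul]
        exact le_max_of_le_left (hχ.1.2.1.monotone h1)
    | succ t ih =>
      obtain ⟨i1, i2, i3⟩ := ih
      set x := mpcLoop g uo ξ t with hx
      have hxs : mpcLoop g uo ξ (t + 1) = iter g x (uo x) 1 := rfl
      rw [hxs]
      obtain ⟨s1, s2⟩ := hstep x i1 i2
      refine ⟨s1, s2.trans (max_le ((hTle _).trans i2) (le_max_right _ _)), ?_⟩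
      have h1 := hχ.1.2.1.monotone s2
      rw [hχ.1.2.1.monotone.map_max] at h1
      refine h1.trans (max_le ?_ (le_max_right _ _))
      have h2 : χ (T (Y x)) ≤ (1 / 2) * χ (Y x) := by
        have := hχT (Y x)
        rw [← NNReal.coe_le_coe] at *
        push_cast at *
        linarith
      refine h2.trans ?_
      calc (1 / 2) * χ (Y x) ≤ (1 / 2) * max ((1 / 2) ^ t * χ (B (ρ (olα (ω ξ))))) (χ η) := by
            gcongr
        _ = max ((1 / 2) ^ (t + 1) * χ (B (ρ (olα (ω ξ))))) ((1 / 2) * χ η) := by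
            rw [mul_max, pow_succ]
            ring_nf
        _ ≤ _ := by
            apply max_le_max le_rfl
            exact mul_le_of_le_one_left zero_le (by norm_num)
  obtain ⟨-, -, h⟩ := hmain t
  set x := mpcLoop g uo ξ t with hx
  have h1 : χ (ρ (ulα (ω x))) ≤ χ (Y x) :=
    hχ.1.2.1.monotone ((hρ.1.2.1.monotone (hsandwich x).1).trans (hWY x))
  have h2 := hΦi.1.2.1.monotone (h1.trans h)
  rw [hΦi.1.2.1.monotone.map_max, hΦ2, hη, hΦ2] at h2
  simpa using h2
end
end
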